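/- arXiv:2508.09723 — 2 statements merged into one kernel-verified Lean document; each statement's English description precedes it below -/
import Mathlib

section
/- For all integers k ≥ 0 and all integers n ≥ 0, d_{7k}(7n + 5) ≡ 0 (mod 7). -/
noncomputable section

/-- `J b = ∏_{k=1}^∞ (1 - q^{b·k})` as a formal power series with integer coefficients. -/
def J (b : ℕ) : PowerSeries ℤ :=
  PowerSeries.mk fun n =>
    PowerSeries.coeff n
      (∏ k ∈ Finset.range (n + 1), (1 - (PowerSeries.X : PowerSeries ℤ) ^ (b * (k + 1))))

/-!
Modulo 7 a seventh power is a series in `q ^ 7`, so from `∑ d_{7k}(n) qⁿ = F ^ 7 * J_1 ^ 6` it is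
enough that `J_1 ^ 6` has no term `q ^ m` with `m ≡ 5`. By Jacobi's identity
`J_1 ^ 3 = ∑ (-1) ^ i (2 i + 1) q ^ (i (i + 1) / 2)`, a term of `J_1 ^ 6 = J_1 ^ 3 * J_1 ^ 3` comes
from exponents `m₁ + m₂ = m` with `8 m₁ + 1 = z ^ 2`, `8 m₂ + 1 = w ^ 2` and `z`, `w` nonzero
modulo 7. If `m ≡ 5` then `z ^ 2 + w ^ 2 = 8 m + 2 ≡ 0`, which is impossible because `-1` is not a
square modulo 7.

Jacobi's identity is the limit of a finite identity, the first-order part of the `q`-binomial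
theorem for `∏ (y + q ^ k x)` at a zero of the middle factor.
-/

section QBinomial

open Finset

variable {R : Type*} [CommRing R] (q : R)

/-- The `q`-Pochhammer symbol `(q; q)_n = ∏_{k=1}^n (1 - q^k)`, the partial products of `J 1`. -/
def qPochhammer (n : ℕ) : R :=
  ∏ k ∈ range n, (1 - q ^ (k + 1))

/-- The Gaussian binomial coefficient `[a + b; a]_q`, indexed by the two parts `a`, `b` and defined
by the `q`-Pascal rule, so that it makes sense for every `q` in a commutative ring. -/
def gaussBinom : ℕ → ℕ → R
  | 0, _ => 1
  | _ + 1, 0 => 1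
  | a + 1, b + 1 => gaussBinom a (b + 1) + q ^ (a + 1) * gaussBinom (a + 1) b

@[simp]
lemma qPochhammer_zero : qPochhammer q 0 = 1 := by
  simp [qPochhammer]

lemma qPochhammer_succ (n : ℕ) :
    qPochhammer q (n + 1) = qPochhammer q n * (1 - q ^ (n + 1)) :=
  prod_range_succ _ _

@[simp]
lemma gaussBinom_zero_left (b : ℕ) : gaussBinom q 0 b = 1 := by
  simp [gaussBinom]

@[simp]
lemma gaussBinom_zero_right (a : ℕ) : gaussBinom q a 0 = 1 := by
  cases a <;> simp [gaussBinom]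

lemma gaussBinom_succ_succ (a b : ℕ) :
    gaussBinom q (a + 1) (b + 1) =
      gaussBinom q a (b + 1) + q ^ (a + 1) * gaussBinom q (a + 1) b := by
  simp [gaussBinom]

lemma gaussBinom_mul_qPochhammer_mul_qPochhammer (a b : ℕ) :
    gaussBinom q a b * qPochhammer q a * qPochhammer q b = qPochhammer q (a + b) := by
  induction a generalizing b with
  | zero => simp
  | succ a iha =>
    induction b with
    | zero => simp
    | succ b ihb =>
      have left := iha (b + 1)
      have right := ihb
      rw [show a + 1 + b = a + (b + 1) by ring, qPochhammer_succ q a] at right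
      rw [qPochhammer_succ q b] at left
      rw [gaussBinom_succ_succ, show a + 1 + (b + 1) = a + (b + 1) + 1 by ring,
        qPochhammer_succ q a, qPochhammer_succ q b, qPochhammer_succ q (a + (b + 1))]
      linear_combination (1 - q ^ (a + 1)) * left + q ^ (a + 1) * (1 - q ^ (b + 1)) * right

lemma sum_antidiagonal_succ_gaussBinom_smul {M : Type*} [AddCommGroup M] [Module R M]
    (f : ℕ → ℕ → M) (N : ℕ) :
    ∑ p ∈ antidiagonal (N + 1), gaussBinom q p.1 p.2 • f p.1 p.2 =
      ∑ p ∈ antidiagonal N,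
        gaussBinom q p.1 p.2 • (f (p.1 + 1) p.2 + q ^ p.1 • f p.1 (p.2 + 1)) := by
  simp only [smul_add, sum_add_distrib]
  cases N with
  | zero => simp [Nat.sum_antidiagonal_succ, add_comm]
  | succ N =>
    rw [Nat.antidiagonal_succ_succ', sum_cons, sum_cons, sum_map, Nat.sum_antidiagonal_succ',
      Nat.sum_antidiagonal_succ]
    simp only [Function.Embedding.prodMap, Function.Embedding.coeFn_mk, Prod.map_fst, Prod.map_snd,
      Nat.succ_eq_add_one, gaussBinom_succ_succ, add_smul, sum_add_distrib, gaussBinom_zero_left,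
      gaussBinom_zero_right, pow_zero, one_smul, smul_smul, mul_comm (q ^ _)]
    abel

theorem prod_add_pow_smul_eq_sum_gaussBinom_smul {A : Type*} [CommRing A] [Algebra R A]
    (x y : A) (N : ℕ) :
    ∏ k ∈ range N, (y + q ^ k • x) =
      ∑ p ∈ antidiagonal N, gaussBinom q p.1 p.2 • q ^ p.1.choose 2 • (x ^ p.1 * y ^ p.2) := by
  induction N generalizing x with
  | zero => simp
  | succ N ih =>
    have shift (k : ℕ) : y + q ^ (k + 1) • x = y + q ^ k • (q • x) := by
      rw [smul_smul, pow_succ]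
    rw [sum_antidiagonal_succ_gaussBinom_smul q (fun a b ↦ q ^ a.choose 2 • (x ^ a * y ^ b)),
      prod_range_succ', prod_congr rfl fun k _ ↦ shift k, ih, sum_mul]
    refine sum_congr rfl fun p _ ↦ ?_
    rw [smul_mul_assoc]
    congr 1
    simp only [Algebra.smul_def, map_pow, map_mul, map_one, mul_pow, pow_add, pow_zero,
      Nat.choose_succ_succ', Nat.choose_one_right]
    ring

end QBinomial

section FiniteJacobiIdentity

open Finset DualNumber

variable {R : Type*} [CommRing R] (q : R)

lemma prod_range_pow_sub_pow (n : ℕ) :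
    ∏ k ∈ range n, (q ^ n - q ^ k) = (-1) ^ n * q ^ n.choose 2 * qPochhammer q n := by
  have factor (k : ℕ) (hk : k ∈ range n) :
      q ^ n - q ^ k = (-1) * q ^ k * (1 - q ^ (n - 1 - k + 1)) := by
    have split : n = k + (n - 1 - k + 1) := by grind
    conv_lhs => rw [split, pow_add]
    ring
  rw [prod_congr rfl factor, prod_mul_distrib, prod_mul_distrib,
    prod_range_reflect (fun k ↦ 1 - q ^ (k + 1)), prod_const, card_range, prod_pow_eq_pow_sum,
    sum_range_id, Nat.choose_two_right, qPochhammer]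

lemma prod_range_pow_sub_pow_add (n : ℕ) :
    ∏ k ∈ range n, (q ^ n - q ^ (n + 1 + k)) = q ^ (n * n) * qPochhammer q n := by
  have factor (k : ℕ) : q ^ n - q ^ (n + 1 + k) = q ^ n * (1 - q ^ (k + 1)) := by ring
  simp_rw [factor, prod_mul_distrib, prod_const, card_range, qPochhammer, pow_mul]

lemma one_add_eps_pow_mul_one_sub_eps_pow (a b : ℕ) :
    ((1 + ε) ^ a * (1 - ε) ^ b : R[ε]) = 1 + ((a : R) - b) • ε := by
  ext
  · simp
  · simp
    ring

/- The derivative is taken with dual numbers: the middle factor is a multiple of `ε`, so the other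
factors enter only through their values at `ε = 0`. -/
lemma snd_prod_range_smul_one_sub_eps_sub (n : ℕ) :
    (∏ k ∈ range (2 * n + 1), (q ^ n • (1 - ε) + q ^ k • -(1 + ε)) : R[ε]).snd =
      -(2 * (-1) ^ n * q ^ ((n + 1).choose 2 + n * n) * qPochhammer q n ^ 2) := by
  have middle : (q ^ n • (1 - ε) + q ^ n • -(1 + ε) : R[ε]) = (-2 * q ^ n) • ε := by
    ext <;> simp
    ring
  have fst_prod (s : ℕ → ℕ) :
      (∏ k ∈ range n, (q ^ n • (1 - ε) + q ^ s k • -(1 + ε)) : R[ε]).fst =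
        ∏ k ∈ range n, (q ^ n - q ^ s k) := by
    rw [← TrivSqZeroExt.fstHom_apply R, map_prod]
    exact prod_congr rfl fun k _ ↦ by simp [sub_eq_add_neg]
  rw [show 2 * n + 1 = n + 1 + n by ring, prod_range_add, prod_range_succ, middle]
  simp only [DualNumber.snd_mul, TrivSqZeroExt.fst_mul, TrivSqZeroExt.fst_smul,
    TrivSqZeroExt.snd_smul, fst_eps, snd_eps, mul_zero, zero_mul, add_zero, zero_add,
    fst_prod (fun k ↦ k), fst_prod (fun k ↦ n + 1 + k), prod_range_pow_sub_pow,
    prod_range_pow_sub_pow_add, smul_eq_mul, Nat.choose_succ_succ', Nat.choose_one_right]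
  ring

theorem sum_antidiagonal_gaussBinom_mul_sub (n : ℕ) :
    ∑ p ∈ antidiagonal (2 * n + 1),
      gaussBinom q p.1 p.2 * (q ^ (p.1.choose 2 + n * p.2) * ((-1) ^ p.1 * ((p.1 : R) - p.2))) =
    -(2 * (-1) ^ n * q ^ ((n + 1).choose 2 + n * n) * qPochhammer q n ^ 2) := by
  rw [← snd_prod_range_smul_one_sub_eps_sub]
  refine .trans ?_ <| congrArg TrivSqZeroExt.snd
    (prod_add_pow_smul_eq_sum_gaussBinom_smul q (-(1 + ε)) (q ^ n • (1 - ε)) (2 * n + 1)).symm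
  rw [TrivSqZeroExt.snd_sum]
  refine sum_congr rfl fun p _ ↦ ?_
  have term : ((-(1 + ε)) ^ p.1 * (q ^ n • (1 - ε)) ^ p.2 : R[ε]) =
      (q ^ (n * p.2) * (-1) ^ p.1) • (1 + ((p.1 : R) - p.2) • ε) := by
    rw [← one_add_eps_pow_mul_one_sub_eps_pow, neg_pow, smul_pow, ← pow_mul]
    simp only [Algebra.smul_def, map_mul, map_pow, map_neg, map_one]
    ring
  simp only [term, TrivSqZeroExt.snd_smul, TrivSqZeroExt.snd_add, TrivSqZeroExt.snd_one, snd_eps,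
    smul_eq_mul, zero_add, mul_one, pow_add]
  ring

lemma sum_antidiagonal_two_mul_add_one {M : Type*} [AddCommMonoid M] (f : ℕ → ℕ → M) (n : ℕ) :
    ∑ p ∈ antidiagonal (2 * n + 1), f p.1 p.2 =
      ∑ i ∈ range (n + 1), (f (n - i) (n + 1 + i) + f (n + 1 + i) (n - i)) := by
  rw [Nat.sum_antidiagonal_eq_sum_range_succ f, show (2 * n + 1).succ = n + 1 + (n + 1) by grind,
    sum_range_add, ← sum_range_reflect, ← sum_add_distrib]
  refine sum_congr rfl fun i hi ↦ ?_
  congr 2 <;> grind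

lemma choose_two_sub_add_mul {i n : ℕ} (h : i ≤ n) :
    (n - i).choose 2 + n * (n + 1 + i) = (n + 1).choose 2 + n * n + (i + 1).choose 2 := by
  qify [h]
  simp only [Nat.cast_choose_two]
  push_cast [h]
  ring

lemma choose_two_add_add_mul_sub {i n : ℕ} (h : i ≤ n) :
    (n + 1 + i).choose 2 + n * (n - i) = (n + 1).choose 2 + n * n + (i + 1).choose 2 := by
  qify [h]
  simp only [Nat.cast_choose_two]
  push_cast
  ring

end FiniteJacobiIdentity

section JacobiIdentity

open Finset PowerSeries

variable {R : Type*} [CommRing R]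

lemma isUnit_qPochhammer_X (n : ℕ) :
    IsUnit (qPochhammer (X : R⟦X⟧) n) := by
  simp [PowerSeries.isUnit_iff_constantCoeff, qPochhammer]

lemma gaussBinom_X_comm (a b : ℕ) :
    gaussBinom (X : R⟦X⟧) a b = gaussBinom X b a := by
  refine (isUnit_qPochhammer_X a).mul_right_cancel <|
    (isUnit_qPochhammer_X b).mul_right_cancel ?_
  rw [gaussBinom_mul_qPochhammer_mul_qPochhammer, mul_right_comm,
    gaussBinom_mul_qPochhammer_mul_qPochhammer, add_comm]

theorem sum_range_mul_gaussBinom_X_eq_qPochhammer_sq (n : ℕ) :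
    ∑ i ∈ range (n + 1), (-1) ^ i * (2 * (i : ℤ⟦X⟧) + 1) * X ^ (i + 1).choose 2 *
      gaussBinom X (n - i) (n + 1 + i) = qPochhammer X n ^ 2 := by
  have factor_ne_zero : (-(2 * (-1) ^ n * X ^ ((n + 1).choose 2 + n * n)) : ℤ⟦X⟧) ≠ 0 := by
    have two_ne_zero : (2 : ℤ⟦X⟧) ≠ 0 := by
      rw [← map_ofNat C 2, Ne, map_eq_zero_iff C C_injective]
      decide
    simp [two_ne_zero, X_ne_zero]
  refine mul_left_cancel₀ factor_ne_zero ?_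
  have unfolded := sum_antidiagonal_gaussBinom_mul_sub (X : ℤ⟦X⟧) n
  rw [sum_antidiagonal_two_mul_add_one (fun a b ↦ gaussBinom (X : ℤ⟦X⟧) a b *
    (X ^ (a.choose 2 + n * b) * ((-1) ^ a * ((a : ℤ⟦X⟧) - (b : ℤ⟦X⟧)))))] at unfolded
  rw [neg_mul _ (qPochhammer X n ^ 2), ← unfolded, mul_sum]
  refine sum_congr rfl fun i hi ↦ ?_
  have hin : i ≤ n := by grind
  rw [gaussBinom_X_comm (n + 1 + i), choose_two_sub_add_mul hin, choose_two_add_add_mul_sub hin]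
  obtain ⟨j, rfl⟩ := Nat.exists_eq_add_of_le hin
  have sign : ((-1) ^ i * (-1) ^ i : ℤ⟦X⟧) = 1 := by
    rw [← mul_pow, neg_one_mul, neg_neg, one_pow]
  rw [Nat.add_sub_cancel_left]
  generalize gaussBinom (X : ℤ⟦X⟧) _ _ = g
  generalize (i + j + 1).choose 2 + (i + j) * (i + j) = e
  push_cast
  simp only [pow_add, pow_one]
  linear_combination (-(2 * i + 1) * (-1) ^ j * g * X ^ e * X ^ (i + 1).choose 2) * sign

lemma X_pow_succ_dvd_qPochhammer_sub {m n : ℕ} (h : m ≤ n) :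
    (X : R⟦X⟧) ^ (m + 1) ∣ qPochhammer X n - qPochhammer X m := by
  induction n, h using Nat.le_induction with
  | base => simp
  | succ n hmn ih =>
    rw [qPochhammer_succ, mul_one_sub, sub_right_comm]
    exact dvd_sub ih ((pow_dvd_pow X (by omega)).mul_left _)

lemma X_pow_succ_dvd_qPochhammer_sub_J_one {m n : ℕ} (h : m ≤ n) :
    (X : ℤ⟦X⟧) ^ (m + 1) ∣ qPochhammer X n - J 1 := by
  refine X_pow_dvd_iff.2 fun i hi ↦ ?_
  have stable {k : ℕ} (hk : i ≤ k) :
      coeff i (qPochhammer (X : ℤ⟦X⟧) k) = coeff i (qPochhammer X i) := by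
    rw [← sub_eq_zero, ← map_sub]
    exact X_pow_dvd_iff.1 (X_pow_succ_dvd_qPochhammer_sub hk) i i.lt_succ_self
  have coeff_J : coeff i (J 1) = coeff i (qPochhammer (X : ℤ⟦X⟧) (i + 1)) := by
    simp [J, qPochhammer]
  rw [map_sub, coeff_J, stable (by omega), stable i.le_succ, sub_self]

lemma constantCoeff_J_one : constantCoeff (J 1) = 1 := by
  rw [← coeff_zero_eq_constantCoeff_apply]
  simp [J, -coeff_zero_eq_constantCoeff]

lemma isUnit_J_one : IsUnit (J 1) := by
  simp [PowerSeries.isUnit_iff_constantCoeff, constantCoeff_J_one]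

lemma X_pow_succ_dvd_gaussBinom_mul_J_one_sub_one {a b : ℕ} (h : a ≤ b) :
    (X : ℤ⟦X⟧) ^ (a + 1) ∣ gaussBinom X a b * J 1 - 1 := by
  rw [← isUnit_J_one.dvd_mul_left]
  have decomposition : J 1 * (gaussBinom X a b * J 1 - 1) =
      (qPochhammer X (a + b) - J 1) - gaussBinom X a b * qPochhammer X a * (qPochhammer X b - J 1) -
        gaussBinom X a b * J 1 * (qPochhammer X a - J 1) := by
    rw [← gaussBinom_mul_qPochhammer_mul_qPochhammer]
    ring
  rw [decomposition]
  exact dvd_sub (dvd_sub (X_pow_succ_dvd_qPochhammer_sub_J_one (by omega))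
    ((X_pow_succ_dvd_qPochhammer_sub_J_one h).mul_left _))
    ((X_pow_succ_dvd_qPochhammer_sub_J_one le_rfl).mul_left _)

theorem X_pow_succ_dvd_J_one_pow_three_sub_sum (n : ℕ) :
    (X : ℤ⟦X⟧) ^ (n + 1) ∣
      J 1 ^ 3 - ∑ i ∈ range (n + 1), (-1) ^ i * (2 * (i : ℤ⟦X⟧) + 1) * X ^ (i + 1).choose 2 := by
  have decomposition :
      J 1 ^ 3 - ∑ i ∈ range (n + 1), (-1) ^ i * (2 * (i : ℤ⟦X⟧) + 1) * X ^ (i + 1).choose 2 =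
        -(J 1 * (qPochhammer X n + J 1) * (qPochhammer X n - J 1)) +
          ∑ i ∈ range (n + 1), (-1) ^ i * (2 * (i : ℤ⟦X⟧) + 1) *
            (X ^ (i + 1).choose 2 * (gaussBinom X (n - i) (n + 1 + i) * J 1 - 1)) := by
    have finite := sum_range_mul_gaussBinom_X_eq_qPochhammer_sq n
    simp only [mul_sub, mul_one, sum_sub_distrib, ← mul_assoc, ← sum_mul, finite]
    ring
  rw [decomposition]
  refine dvd_add (((X_pow_succ_dvd_qPochhammer_sub_J_one le_rfl).mul_left _).neg_right)
    (dvd_sum fun i _ ↦ Dvd.dvd.mul_left ?_ _)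
  have exponent : n + 1 ≤ (i + 1).choose 2 + (n - i + 1) := by
    rw [Nat.choose_succ_succ', Nat.choose_one_right]
    omega
  refine (pow_dvd_pow X exponent).trans ?_
  rw [pow_add]
  exact mul_dvd_mul_left _ (X_pow_succ_dvd_gaussBinom_mul_J_one_sub_one (by omega))

theorem coeff_J_one_pow_three (m : ℕ) :
    coeff m (J 1 ^ 3) =
      ∑ i ∈ range (m + 1), if m = (i + 1).choose 2 then (-1) ^ i * (2 * i + 1 : ℤ) else 0 := by
  have truncated := X_pow_dvd_iff.1 (X_pow_succ_dvd_J_one_pow_three_sub_sum m) m m.lt_succ_self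
  rw [map_sub, sub_eq_zero, map_sum] at truncated
  rw [truncated]
  refine sum_congr rfl fun i _ ↦ ?_
  have const : ((-1) ^ i * (2 * i + 1) : ℤ⟦X⟧) = C ((-1) ^ i * (2 * i + 1) : ℤ) := by simp
  rw [const, coeff_C_mul, coeff_X_pow, mul_ite, mul_one, mul_zero]

end JacobiIdentity

section Congruence

open Finset PowerSeries

variable {R : Type*} [CommRing R]

lemma eight_mul_choose_two_add_one (i : ℕ) : 8 * (i + 1).choose 2 + 1 = (2 * i + 1) ^ 2 := by
  qify
  rw [Nat.cast_choose_two]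
  push_cast
  ring

lemma exists_sq_eq_of_intCast_coeff_J_one_pow_three_ne_zero {m : ℕ}
    (h : ((coeff m (J 1 ^ 3) : ℤ) : R) ≠ 0) : ∃ z : R, z ≠ 0 ∧ z ^ 2 = 8 * m + 1 := by
  rw [coeff_J_one_pow_three, Int.cast_sum] at h
  obtain ⟨i, -, hi⟩ := exists_ne_zero_of_sum_ne_zero h
  split_ifs at hi with hm
  · refine ⟨2 * i + 1, fun hz ↦ hi (by simp [hz]), ?_⟩
    rw [hm]
    exact_mod_cast congrArg (Nat.cast (R := R)) (eight_mul_choose_two_add_one i).symm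
  · simp at hi

lemma eq_zero_of_sq_add_sq_eq_zero_zmod_seven :
    ∀ z w : ZMod 7, z ^ 2 + w ^ 2 = 0 → z = 0 := by
  decide

lemma seven_dvd_coeff_J_one_pow_six {m : ℕ} (hm : m % 7 = 5) : 7 ∣ coeff m (J 1 ^ 6) := by
  rw [show J 1 ^ 6 = J 1 ^ 3 * J 1 ^ 3 by ring, coeff_mul]
  refine dvd_sum fun p hp ↦ ?_
  refine (ZMod.intCast_zmod_eq_zero_iff_dvd _ 7).1 ?_
  rw [Int.cast_mul]
  by_contra hne
  obtain ⟨z, hz, hz_sq⟩ :=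
    exists_sq_eq_of_intCast_coeff_J_one_pow_three_ne_zero (left_ne_zero_of_mul hne)
  obtain ⟨w, -, hw_sq⟩ :=
    exists_sq_eq_of_intCast_coeff_J_one_pow_three_ne_zero (right_ne_zero_of_mul hne)
  have sum_eq : ((p.1 + p.2 : ℕ) : ZMod 7) = (5 : ℕ) := by
    rw [mem_antidiagonal.1 hp]
    exact (ZMod.natCast_eq_natCast_iff m 5 7).2 hm
  refine hz (eq_zero_of_sq_add_sq_eq_zero_zmod_seven z w ?_)
  push_cast at sum_eq
  have char : (42 : ZMod 7) = 0 := by decide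
  linear_combination hz_sq + hw_sq + 8 * sum_eq + char

lemma coeff_pow_expChar_eq_zero_of_not_dvd (p : ℕ) [ExpChar R p]
    (f : R⟦X⟧) {m : ℕ} (h : ¬ p ∣ m) : coeff m (f ^ p) = 0 := by
  have frobenius_expand : map (frobenius R p) (expand p (expChar_ne_zero R p) f) = f ^ p :=
    MvPowerSeries.map_frobenius_expand p (expChar_ne_zero R p)
  rw [← frobenius_expand, coeff_map, coeff_expand_of_not_dvd p _ f h, map_zero]

lemma dvd_coeff_pow_of_not_dvd {p m : ℕ} (hp : p.Prime) (f : ℤ⟦X⟧) (h : ¬ p ∣ m) :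
    (p : ℤ) ∣ coeff m (f ^ p) := by
  have : Fact p.Prime := ⟨hp⟩
  rw [← ZMod.intCast_zmod_eq_zero_iff_dvd, ← eq_intCast (Int.castRingHom (ZMod p)), ← coeff_map,
    map_pow, coeff_pow_expChar_eq_zero_of_not_dvd p _ h]

theorem stmt2_general {D F : ℤ⟦X⟧} {m : ℕ} (h : D * J 1 ^ (7 * m + 1) = F ^ 7) (n : ℕ) :
    7 ∣ coeff (7 * n + 5) D := by
  obtain ⟨u, hu⟩ := isUnit_J_one.exists_right_inv
  have factored : D = (F * u ^ (m + 1)) ^ 7 * J 1 ^ 6 :=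
    calc D = D * (J 1 * u) ^ (7 * (m + 1)) := by rw [hu, one_pow, mul_one]
      _ = D * J 1 ^ (7 * m + 1) * (u ^ (m + 1)) ^ 7 * J 1 ^ 6 := by ring
      _ = (F * u ^ (m + 1)) ^ 7 * J 1 ^ 6 := by rw [h, mul_pow]
  rw [factored, coeff_mul]
  refine dvd_sum fun p hp ↦ ?_
  have hp_add : p.1 + p.2 = 7 * n + 5 := mem_antidiagonal.1 hp
  by_cases hp_dvd : 7 ∣ p.1
  · exact (seven_dvd_coeff_J_one_pow_six (by omega)).mul_left _
  · exact (dvd_coeff_pow_of_not_dvd (by norm_num) _ hp_dvd).mul_right _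

end Congruence

/-- for all k ≥ 0 and n ≥ 0, `d_{7k}(7n + 5) ≡ 0 (mod 7)`, where for each `k`
`d_k` is defined by `∑ d_k(n) qⁿ = J_2^k / J_1^{3k+1}`. -/
theorem stmt2 (d : ℕ → ℕ → ℤ)
    (hd : ∀ k : ℕ, PowerSeries.mk (d k) * (J 1) ^ (3 * k + 1) = (J 2) ^ k)
    (k : ℕ) (n : ℕ) :
    (7 : ℤ) ∣ d (7 * k) (7 * n + 5) := by
  have h : PowerSeries.mk (d (7 * k)) * J 1 ^ (7 * (3 * k) + 1) = (J 2 ^ k) ^ 7 := by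
    rw [← pow_mul, mul_comm k 7, ← hd, mul_left_comm]
  simpa only [PowerSeries.coeff_mk] using stmt2_general h n
end
end

section
/- As formal power series in q, t(q)^7 = ∑_{l=0}^{6} a_l(t(q^7))·t(q)^l, where t(q^7) denotes the series obtained from t by the substitution q ↦ q^7. -/
noncomputable section

/-- The polynomials `a_0, …, a_6` of Theorem 2.6 (evaluated at `x`). -/
def aPoly {R : Type*} [CommRing R] (l : ℕ) (x : R) : R :=
  match l with
  | 0 => x
  | 1 => 7 ^ 2 * x ^ 2 + 4 * 7 * x
  | 2 => 7 ^ 4 * x ^ 3 + 4 * 7 ^ 3 * x ^ 2 + 46 * 7 * x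
  | 3 => 7 ^ 6 * x ^ 4 + 4 * 7 ^ 5 * x ^ 3 + 46 * 7 ^ 3 * x ^ 2 + 272 * 7 * x
  | 4 => 7 ^ 8 * x ^ 5 + 4 * 7 ^ 7 * x ^ 4 + 46 * 7 ^ 5 * x ^ 3 + 272 * 7 ^ 3 * x ^ 2
      + 845 * 7 * x
  | 5 => 7 ^ 10 * x ^ 6 + 4 * 7 ^ 9 * x ^ 5 + 46 * 7 ^ 7 * x ^ 4 + 272 * 7 ^ 5 * x ^ 3
      + 845 * 7 ^ 3 * x ^ 2 + 176 * 7 ^ 2 * x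
  | 6 => 7 ^ 12 * x ^ 7 + 4 * 7 ^ 11 * x ^ 6 + 46 * 7 ^ 9 * x ^ 5 + 272 * 7 ^ 7 * x ^ 4
      + 845 * 7 ^ 5 * x ^ 3 + 176 * 7 ^ 4 * x ^ 2 + 82 * 7 ^ 2 * x
  | _ => 0

/-- Substitution `q ↦ q^7` on formal power series, defined coefficientwise. -/
def expand7 (f : PowerSeries ℤ) : PowerSeries ℤ :=
  PowerSeries.mk fun m => if 7 ∣ m then PowerSeries.coeff (m / 7) f else 0

/-!
Split Euler's product `J 1` by exponents modulo `7`. Euler's pentagonal number theorem shows that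
only the classes `0, 1, 2, 5` occur and that the part of class `2` is `w = -q ^ 2 * J 49`; Jacobi's
expansion of `J 1 ^ 3` gives four cubic relations between the parts. These relations make `J 1` a
root of a polynomial of degree seven whose coefficients involve only `w` and a quartic form `S` of
the parts. The other roots are obtained by rotating `q` by seventh roots of unity, so Vieta's
formula expresses `S ^ 2` through the product of all rotations of `J 1`, and `S = q * J 7 ^ 4`
follows. With `e = J 1`, the septic equation becomes, after separating odd and even powers and
squaring twice, an equation between `t = S / e ^ 4` and `t(q ^ 7) = w ^ 4 / S`, which is the modular
equation.
-/

/-! ### A finite form of Jacobi's identity -/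

section QBinomial

variable {R : Type*} [CommRing R]

/-- The `q`-Pochhammer symbol `(q; q)_n = (1 - q) (1 - q ^ 2) ⋯ (1 - q ^ n)`. -/
def qPoch (q : R) (n : ℕ) : R :=
  ∏ k ∈ Finset.range n, (1 - q ^ (k + 1))

/-- The Gaussian binomial coefficient, defined by a `q`-Pascal recursion so that it makes sense for
every `q`. The truncated exponent `n - k` is harmless, since `qBinom q n k = 0` for `n < k`. -/
def qBinom (q : R) : ℕ → ℕ → R
  | _, 0 => 1
  | 0, _ + 1 => 0
  | n + 1, k + 1 => qBinom q n (k + 1) + q ^ (n - k) * qBinom q n k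

lemma qPoch_succ (q : R) (n : ℕ) : qPoch q (n + 1) = qPoch q n * (1 - q ^ (n + 1)) :=
  Finset.prod_range_succ _ n

lemma map_qPoch {A F : Type*} [CommRing A] [FunLike F R A] [RingHomClass F R A] (φ : F) (q : R)
    (n : ℕ) : φ (qPoch q n) = qPoch (φ q) n := by
  simp only [qPoch, map_prod, map_sub, map_one, map_pow]

lemma qPoch_ne_zero [IsDomain R] {q : R} (hq : ∀ n ≠ 0, q ^ n ≠ 1) (n : ℕ) : qPoch q n ≠ 0 :=
  Finset.prod_ne_zero_iff.2 fun k _ => sub_ne_zero.2 (hq (k + 1) k.succ_ne_zero).symm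

lemma qBinom_eq_zero_of_lt (q : R) {n k : ℕ} (h : n < k) : qBinom q n k = 0 := by
  induction n generalizing k with
  | zero => obtain _ | k := k <;> simp_all [qBinom]
  | succ n ih =>
    obtain _ | k := k
    · simp at h
    · rw [qBinom, ih (by lia), ih (by lia), mul_zero, add_zero]

lemma qBinom_mul_qPoch_mul_qPoch (q : R) (j m : ℕ) :
    qBinom q (j + m) j * (qPoch q j * qPoch q m) = qPoch q (j + m) := by
  induction j generalizing m with
  | zero => simp [qBinom, qPoch]
  | succ j ihj =>
    induction m with
    | zero =>
      have h := ihj 0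
      rw [add_zero] at h ⊢
      rw [qBinom, qBinom_eq_zero_of_lt q j.lt_succ_self, Nat.sub_self, qPoch_succ]
      linear_combination (1 - q ^ (j + 1)) * h
    | succ m ihm =>
      have h := ihj (m + 1)
      have hsub : j + (m + 1) - j = m + 1 := by lia
      have hcomm : j + 1 + m = j + (m + 1) := by lia
      rw [hcomm] at ihm
      rw [show j + 1 + (m + 1) = j + (m + 1) + 1 by lia, qBinom, hsub, qPoch_succ q m,
        qPoch_succ q (j + (m + 1)), qPoch_succ q j]
      rw [qPoch_succ q m] at h
      rw [qPoch_succ q j] at ihm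
      linear_combination (1 - q ^ (m + 1)) * ihm + q ^ (m + 1) * (1 - q ^ (j + 1)) * h

lemma qBinom_symm [IsDomain R] {q : R} (hq : ∀ n ≠ 0, q ^ n ≠ 1) (j m : ℕ) :
    qBinom q (j + m) j = qBinom q (j + m) m := by
  refine mul_right_cancel₀ (mul_ne_zero (qPoch_ne_zero hq j) (qPoch_ne_zero hq m)) ?_
  rw [qBinom_mul_qPoch_mul_qPoch, mul_comm (qPoch q j), add_comm j, qBinom_mul_qPoch_mul_qPoch]

open Polynomial in
theorem coeff_prod_C_sub_C_pow_mul_X (q y : R) (N j : ℕ) :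
    (∏ k ∈ Finset.range N, (C y - C (q ^ k) * X)).coeff j =
      (-1) ^ j * q ^ j.choose 2 * qBinom q N j * y ^ (N - j) := by
  induction N generalizing j with
  | zero => obtain _ | j := j <;> simp [qBinom, coeff_one]
  | succ N ih =>
    rw [Finset.prod_range_succ, mul_sub, ← mul_assoc, coeff_sub, coeff_mul_C]
    obtain _ | j := j
    · rw [mul_coeff_zero, coeff_X_zero, ih]
      simp [qBinom, pow_succ]
    rw [coeff_mul_X, coeff_mul_C, ih, ih, qBinom, Nat.choose_succ_succ' j 1, Nat.choose_one_right,
      Nat.add_sub_add_right]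
    obtain hlt | rfl | hlt := lt_trichotomy j N
    · obtain ⟨r, rfl⟩ := Nat.exists_eq_add_of_lt hlt
      rw [show j + r + 1 - (j + 1) = r by lia, show j + r + 1 - j = r + 1 by lia]
      ring
    · rw [qBinom_eq_zero_of_lt q j.lt_succ_self, Nat.sub_self]
      ring
    · rw [qBinom_eq_zero_of_lt q hlt, qBinom_eq_zero_of_lt q (hlt.trans j.lt_succ_self)]
      ring

lemma choose_two_add (a b : ℕ) : (a + b).choose 2 = a.choose 2 + b.choose 2 + a * b := by
  induction b with
  | zero => simp
  | succ b ih =>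
    rw [← add_assoc, Nat.choose_succ_succ' (a + b), Nat.choose_succ_succ' b, ih]
    simp only [Nat.choose_one_right]
    ring

lemma two_mul_succ_choose_two (m : ℕ) : 2 * (m + 1).choose 2 = (m + 1) * m := by
  rw [mul_comm, Nat.choose_two_right, Nat.div_two_mul_two_of_even (Nat.even_mul_pred_self _),
    Nat.add_sub_cancel]

lemma prod_pow_sub_pow (q : R) (n : ℕ) :
    ∏ k ∈ Finset.range n, (q ^ n - q ^ k) = (-1) ^ n * q ^ n.choose 2 * qPoch q n := by
  have hfactor : ∀ k ∈ Finset.range n, q ^ n - q ^ k = -1 * q ^ k * (1 - q ^ (n - 1 - k + 1)) := by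
    intro k hk
    obtain ⟨r, rfl⟩ := Nat.exists_eq_add_of_lt (Finset.mem_range.1 hk)
    rw [show k + r + 1 - 1 - k + 1 = r + 1 by lia]
    ring
  rw [Finset.prod_congr rfl hfactor, Finset.prod_mul_distrib, Finset.prod_mul_distrib,
    Finset.prod_const, Finset.card_range, Finset.prod_pow_eq_pow_sum, Finset.sum_range_id,
    ← Nat.choose_two_right, Finset.prod_range_reflect (fun k => 1 - q ^ (k + 1)), qPoch]

lemma prod_pow_sub_pow_add (q : R) (n : ℕ) :
    ∏ k ∈ Finset.range n, (q ^ n - q ^ (n + 1 + k)) = q ^ (n * n) * qPoch q n := by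
  have hfactor (k : ℕ) : q ^ n - q ^ (n + 1 + k) = q ^ n * (1 - q ^ (k + 1)) := by ring
  simp only [hfactor, Finset.prod_mul_distrib, Finset.prod_const, Finset.card_range, ← pow_mul,
    qPoch]

open Polynomial in
/-- The polynomial `∏_{k ≤ 2n} (q ^ n - q ^ k X)`. It vanishes at `1`, and expanding its derivative
there in two ways yields the finite form of Jacobi's identity. -/
def centeredProd (q : R) (n : ℕ) : R[X] :=
  ∏ k ∈ Finset.range (2 * n + 1), (C (q ^ n) - C (q ^ k) * X)

namespace centeredProd

open Polynomial

lemma natDegree_lt (q : R) (n : ℕ) : (centeredProd q n).natDegree < n + 1 + (n + 1) := by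
  refine (natDegree_prod_le _ _).trans_lt ?_
  refine (Finset.sum_le_card_nsmul _ _ 1 fun k _ => by compute_degree).trans_lt ?_
  rw [Finset.card_range, smul_eq_mul]
  lia

lemma eval_one_derivative (q : R) (n : ℕ) :
    (derivative (centeredProd q n)).eval 1 =
      (-1) ^ (n + 1) * q ^ ((n + 1).choose 2 + n * n) * qPoch q n ^ 2 := by
  rw [centeredProd, show 2 * n + 1 = n + 1 + n by lia, Finset.prod_range_add,
    Finset.prod_range_succ]
  simp only [derivative_mul, derivative_sub, derivative_C, derivative_X, eval_add, eval_mul,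
    eval_sub, eval_neg, eval_C, eval_X, eval_prod, mul_one, sub_self, mul_zero, zero_mul, zero_add,
    zero_sub, add_zero]
  rw [prod_pow_sub_pow, prod_pow_sub_pow_add, Nat.choose_succ_succ' n 1, Nat.choose_one_right]
  ring

lemma coeff_add (q : R) {m n : ℕ} (hm : m ≤ n) :
    (centeredProd q n).coeff (n + 1 + m) = (-1) ^ (n + 1) * q ^ ((n + 1).choose 2 + n * n) *
      ((-1) ^ m * q ^ (m + 1).choose 2 * qBinom q (2 * n + 1) (n + 1 + m)) := by
  obtain ⟨r, rfl⟩ := Nat.exists_eq_add_of_le hm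
  rw [centeredProd, coeff_prod_C_sub_C_pow_mul_X,
    show 2 * (m + r) + 1 - (m + r + 1 + m) = r by lia, choose_two_add (m + r + 1),
    Nat.choose_succ_succ' m 1, Nat.choose_one_right]
  ring

variable [IsDomain R] {q : R}

lemma coeff_sub (hq : ∀ n ≠ 0, q ^ n ≠ 1) {m n : ℕ} (hm : m ≤ n) :
    (centeredProd q n).coeff (n - m) = -(centeredProd q n).coeff (n + 1 + m) := by
  rw [coeff_add q hm]
  obtain ⟨r, rfl⟩ := Nat.exists_eq_add_of_le hm
  have hsymm : qBinom q (2 * (m + r) + 1) (m + r + 1 + m) = qBinom q (2 * (m + r) + 1) r := by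
    rw [show 2 * (m + r) + 1 = m + r + 1 + m + r by lia, qBinom_symm hq]
  have hexp : r.choose 2 + (m + r) * (m + r + (m + 1)) =
      (m + r + 1).choose 2 + (m + r) * (m + r) + (m + 1).choose 2 := by
    have hsplit := choose_two_add (m + 1) r
    rw [show m + 1 + r = m + r + 1 by lia] at hsplit
    linarith [two_mul_succ_choose_two m]
  have hsign : ((-1 : R) ^ m) ^ 2 = 1 := by rw [← pow_mul, mul_comm, pow_mul, neg_one_sq, one_pow]
  have hpow : q ^ r.choose 2 * q ^ ((m + r) * (m + r + (m + 1))) =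
      q ^ ((m + r + 1).choose 2 + (m + r) * (m + r)) * q ^ (m + 1).choose 2 := by
    rw [← pow_add, ← pow_add, hexp]
  rw [hsymm, centeredProd, coeff_prod_C_sub_C_pow_mul_X, Nat.add_sub_cancel_left,
    show 2 * (m + r) + 1 - r = m + r + (m + 1) by lia, ← pow_mul]
  linear_combination (-1) ^ r * qBinom q (2 * (m + r) + 1) r * (hpow - hsign *
    (q ^ ((m + r + 1).choose 2 + (m + r) * (m + r)) * q ^ (m + 1).choose 2))

lemma eval_one_derivative_eq_sum (hq : ∀ n ≠ 0, q ^ n ≠ 1) (n : ℕ) :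
    (derivative (centeredProd q n)).eval 1 =
      (-1) ^ (n + 1) * q ^ ((n + 1).choose 2 + n * n) * ∑ m ∈ Finset.range (n + 1),
        (-1) ^ m * (2 * m + 1) * q ^ (m + 1).choose 2 * qBinom q (2 * n + 1) (n + 1 + m) := by
  rw [derivative_eval, sum_over_range' _ (by simp) _ (natDegree_lt q n), Finset.sum_range_add,
    ← Finset.sum_range_reflect, ← Finset.sum_add_distrib, Finset.mul_sum]
  refine Finset.sum_congr rfl fun m hm => ?_
  have hmn : m ≤ n := Finset.mem_range_succ_iff.1 hm
  rw [Nat.add_sub_cancel, coeff_sub hq hmn, coeff_add q hmn]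
  push_cast [hmn]
  ring

end centeredProd

theorem sum_qBinom_eq_qPoch_sq [IsDomain R] {q : R} (hq₀ : q ≠ 0) (hq : ∀ n ≠ 0, q ^ n ≠ 1)
    (n : ℕ) :
    ∑ m ∈ Finset.range (n + 1),
        (-1) ^ m * (2 * m + 1) * q ^ (m + 1).choose 2 * qBinom q (2 * n + 1) (n + 1 + m) =
      qPoch q n ^ 2 := by
  refine mul_left_cancel₀ (mul_ne_zero (pow_ne_zero (n + 1) (neg_ne_zero.2 one_ne_zero))
    (pow_ne_zero ((n + 1).choose 2 + n * n) hq₀)) ?_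
  rw [← centeredProd.eval_one_derivative_eq_sum hq, centeredProd.eval_one_derivative]

end QBinomial

/-! ### Congruences modulo powers of `X` and infinite products -/

section Truncation

open PowerSeries

variable {R : Type*} [CommRing R]

/-- Reduction of power series modulo `X ^ n`. Infinite products are handled by replacing them, at
each level `n`, with finite products. -/
def modXPow (n : ℕ) : R⟦X⟧ →+* R⟦X⟧ ⧸ Ideal.span {(X : R⟦X⟧) ^ n} :=
  Ideal.Quotient.mk _

lemma modXPow_eq_iff {n : ℕ} {f g : R⟦X⟧} :
    modXPow n f = modXPow n g ↔ ∀ i < n, coeff i f = coeff i g := by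
  rw [modXPow, Ideal.Quotient.eq, Ideal.mem_span_singleton, X_pow_dvd_iff]
  simp only [map_sub, sub_eq_zero]

lemma eq_of_forall_modXPow_eq {f g : R⟦X⟧} (h : ∀ n, modXPow (n + 1) f = modXPow (n + 1) g) :
    f = g :=
  ext fun n => modXPow_eq_iff.1 (h n) n n.lt_succ_self

lemma modXPow_X_pow {m n : ℕ} (h : n ≤ m) : modXPow n ((X : R⟦X⟧) ^ m) = 0 :=
  Ideal.Quotient.eq_zero_iff_mem.2 (Ideal.mem_span_singleton.2 (pow_dvd_pow X h))

lemma modXPow_map {A : Type*} [CommRing A] (φ : R →+* A) {n : ℕ} {f g : R⟦X⟧}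
    (h : modXPow n f = modXPow n g) : modXPow n (map φ f) = modXPow n (map φ g) :=
  modXPow_eq_iff.2 fun i hi => by rw [coeff_map, coeff_map, modXPow_eq_iff.1 h i hi]

lemma modXPow_rescale (a : R) {n : ℕ} {f g : R⟦X⟧} (h : modXPow n f = modXPow n g) :
    modXPow n (rescale a f) = modXPow n (rescale a g) :=
  modXPow_eq_iff.2 fun i hi => by rw [coeff_rescale, coeff_rescale, modXPow_eq_iff.1 h i hi]

lemma modXPow_expand {d : ℕ} (hd : d ≠ 0) {n : ℕ} {f g : R⟦X⟧} (h : modXPow n f = modXPow n g) :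
    modXPow n (expand d hd f) = modXPow n (expand d hd g) :=
  modXPow_eq_iff.2 fun i hi => by
    rw [coeff_expand, coeff_expand, modXPow_eq_iff.1 h _ ((i.div_le_self d).trans_lt hi)]

lemma modXPow_qPoch {b m n : ℕ} (hb : b ≠ 0) (h : n ≤ m) :
    modXPow (n + 1) (qPoch ((X : R⟦X⟧) ^ b) m) = modXPow (n + 1) (qPoch (X ^ b) n) := by
  induction m, h using Nat.le_induction with
  | base => rfl
  | succ m hm ih =>
    have hexp : n + 1 ≤ b * (m + 1) := by
      nlinarith [Nat.pos_of_ne_zero hb]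
    rw [qPoch_succ, map_mul, map_sub, ← pow_mul, modXPow_X_pow hexp, map_one, sub_zero, mul_one, ih]

lemma modXPow_J {b m n : ℕ} (hb : b ≠ 0) (h : n ≤ m) :
    modXPow (n + 1) (J b) = modXPow (n + 1) (qPoch (X ^ b) m) := by
  refine modXPow_eq_iff.2 fun i hi => ?_
  have hi' : i ≤ m := by lia
  rw [modXPow_eq_iff.1 (modXPow_qPoch hb hi') i i.lt_succ_self,
    ← modXPow_eq_iff.1 (modXPow_qPoch hb i.le_succ) i i.lt_succ_self]
  simp only [J, qPoch, coeff_mk, pow_mul]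

lemma modXPow_J_one {m n : ℕ} (h : n ≤ m) :
    modXPow (n + 1) (J 1) = modXPow (n + 1) (qPoch X m) := by
  rw [modXPow_J one_ne_zero h, pow_one]

lemma constantCoeff_J {b : ℕ} (hb : b ≠ 0) : constantCoeff (J b) = 1 := by
  rw [← coeff_zero_eq_constantCoeff_apply, modXPow_eq_iff.1 (modXPow_J hb le_rfl) 0 zero_lt_one]
  simp [qPoch]

lemma J_ne_zero {b : ℕ} (hb : b ≠ 0) : J b ≠ 0 := by
  intro h
  simpa [h] using constantCoeff_J hb

lemma expand_J {b d : ℕ} (hb : b ≠ 0) (hd : d ≠ 0) : expand d hd (J b) = J (d * b) := by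
  refine eq_of_forall_modXPow_eq fun n => ?_
  rw [modXPow_expand hd (modXPow_J hb le_rfl), map_qPoch, map_pow, expand_X, ← pow_mul,
    modXPow_J (mul_ne_zero hd hb) le_rfl]

lemma J_one_eq_pentagonalSeries : J 1 = pentagonalSeries ℤ := by
  ext n
  obtain ⟨s, hs⟩ := Filter.eventually_atTop.1 (coeff_prod_one_sub_X_pow_eventually_eq ℤ n)
  obtain ⟨m, hm⟩ := Finset.exists_nat_subset_range s
  rw [← hs (Finset.range (max m n)) (hm.trans (Finset.range_mono (le_max_left m n))),
    modXPow_eq_iff.1 (modXPow_J_one (le_max_right m n)) n n.lt_succ_self, qPoch]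

lemma modXPow_qBinom_mul_J {j m n : ℕ} (hj : n ≤ j) (hm : n ≤ m) :
    modXPow (n + 1) (qBinom X (j + m) j * J 1) = 1 := by
  have hunit : IsUnit (modXPow (n + 1) (J 1)) :=
    (isUnit_iff_constantCoeff.2 (by simp [constantCoeff_J one_ne_zero])).map _
  refine hunit.mul_left_cancel ?_
  have h := congrArg (modXPow (n + 1)) (qBinom_mul_qPoch_mul_qPoch (X : ℤ⟦X⟧) j m)
  simp only [map_mul, ← modXPow_J_one hj, ← modXPow_J_one hm,
    ← modXPow_J_one (hj.trans (Nat.le_add_right j m))] at h ⊢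
  linear_combination h

theorem modXPow_J_one_pow_three (n : ℕ) :
    modXPow (n + 1) (J 1 ^ 3) = modXPow (n + 1) (∑ m ∈ Finset.range (2 * n + 1),
      C ((-1) ^ m * (2 * m + 1) : ℤ) * X ^ (m + 1).choose 2) := by
  have hX (k : ℕ) (hk : k ≠ 0) : (X : ℤ⟦X⟧) ^ k ≠ 1 := fun h => by
    simpa [hk] using congrArg constantCoeff h
  have hterm : ∀ m ∈ Finset.range (2 * n + 1),
      modXPow (n + 1) ((X : ℤ⟦X⟧) ^ (m + 1).choose 2 *
          (qBinom X (2 * (2 * n) + 1) (2 * n + 1 + m) * J 1)) =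
        modXPow (n + 1) (X ^ (m + 1).choose 2) := by
    intro m hm
    have hm' : m < 2 * n + 1 := Finset.mem_range.1 hm
    rw [map_mul]
    obtain hmn | hmn := le_or_gt m n
    · rw [show 2 * (2 * n) + 1 = 2 * n + 1 + m + (2 * n - m) by lia,
        modXPow_qBinom_mul_J (by lia) (by lia), mul_one]
    · rw [modXPow_X_pow (by nlinarith [two_mul_succ_choose_two m]), zero_mul]
  rw [pow_succ (J 1), map_mul, map_pow, modXPow_J_one (by lia : n ≤ 2 * n), ← map_pow,
    ← sum_qBinom_eq_qPoch_sq X_ne_zero hX, ← modXPow_J_one (by lia : n ≤ 2 * n), ← map_mul,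
    Finset.sum_mul, map_sum, map_sum]
  refine Finset.sum_congr rfl fun m hm => ?_
  have hC : (C ((-1) ^ m * (2 * m + 1) : ℤ) : ℤ⟦X⟧) = (-1) ^ m * (2 * m + 1) := by simp
  rw [map_mul _ (C _), ← hterm m hm, ← map_mul, hC]
  exact congrArg _ (by ring)

end Truncation

/-! ### The septic equation -/

section Septic

open Polynomial

variable {R : Type*} [CommRing R] {u v y w : R}

/-- The relations satisfied by the parts `u, v, w, y` of Euler's product `J 1` with exponents
`0, 1, 2, 5` modulo `7`. They are invariant under the rotation `u → v → y → u`. -/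
structure SepticRelations (u v y w : R) : Prop where
  mul_eq : u * v * y = w ^ 3
  rel_u : u * w ^ 2 + v ^ 2 * w + v * y ^ 2 = 0
  rel_v : v * w ^ 2 + y ^ 2 * w + y * u ^ 2 = 0
  rel_y : y * w ^ 2 + u ^ 2 * w + u * v ^ 2 = 0

/-- The Klein quartic form of `u, v, y`, negated and shifted by `8 * w ^ 4` so that its value on
the parts of `J 1` is `q * J 7 ^ 4`. -/
def kleinForm (u v y w : R) : R :=
  -(u ^ 3 * v + v ^ 3 * y + y ^ 3 * u) - 8 * w ^ 4

/-- The polynomial of degree seven which, for `S = kleinForm u v y w`, has `u + v + y + w` as a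
root whenever `SepticRelations u v y w` holds. -/
def septic (w S : R) : R[X] :=
  C w * X ^ 7 - C (7 * w ^ 2) * X ^ 6 + C (21 * w ^ 3) * X ^ 5 - C (49 * w ^ 4) * X ^ 4
    + C (147 * w ^ 5 + 7 * w * S) * X ^ 3 - C (343 * w ^ 6 + 35 * w ^ 2 * S) * X ^ 2
    + C (343 * w ^ 7 + 49 * w ^ 3 * S) * X + C (S ^ 2)

lemma eval_septic (w S e : R) :
    (septic w S).eval e = w * e ^ 7 - 7 * w ^ 2 * e ^ 6 + 21 * w ^ 3 * e ^ 5 - 49 * w ^ 4 * e ^ 4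
      + (147 * w ^ 5 + 7 * w * S) * e ^ 3 - (343 * w ^ 6 + 35 * w ^ 2 * S) * e ^ 2
      + (343 * w ^ 7 + 49 * w ^ 3 * S) * e + S ^ 2 := by
  simp only [septic, eval_add, eval_sub, eval_mul, eval_pow, eval_C, eval_X]

lemma natDegree_septic_le (w S : R) : (septic w S).natDegree ≤ 7 := by
  unfold septic
  compute_degree

lemma coeff_septic_zero (w S : R) : (septic w S).coeff 0 = S ^ 2 := by
  rw [coeff_zero_eq_eval_zero, eval_septic]
  ring

lemma coeff_septic_seven (w S : R) : (septic w S).coeff 7 = w := by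
  unfold septic
  compute_degree!

lemma map_kleinForm {A : Type*} [CommRing A] (φ : R →+* A) (u v y w : R) :
    φ (kleinForm u v y w) = kleinForm (φ u) (φ v) (φ y) (φ w) := by
  simp only [kleinForm, map_sub, map_neg, map_add, map_mul, map_pow, map_ofNat]

lemma kleinForm_twist {θ : R} (hθ : θ ^ 7 = 1) (u v y w : R) :
    kleinForm (θ ^ 5 * u) (θ ^ 6 * v) (θ ^ 3 * y) w = kleinForm u v y w := by
  simp only [kleinForm]
  linear_combination
    (-(θ ^ 14 + θ ^ 7 + 1) * (u ^ 3 * v + v ^ 3 * y) - (θ ^ 7 + 1) * (y ^ 3 * u)) * hθ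

namespace SepticRelations

protected lemma map {A : Type*} [CommRing A] (φ : R →+* A) (h : SepticRelations u v y w) :
    SepticRelations (φ u) (φ v) (φ y) (φ w) where
  mul_eq := by simp only [← map_mul, ← map_pow, h.mul_eq]
  rel_u := by simp only [← map_mul, ← map_pow, ← map_add, h.rel_u, map_zero]
  rel_v := by simp only [← map_mul, ← map_pow, ← map_add, h.rel_v, map_zero]
  rel_y := by simp only [← map_mul, ← map_pow, ← map_add, h.rel_y, map_zero]

protected lemma twist {θ : R} (hθ : θ ^ 7 = 1) (h : SepticRelations u v y w) :
    SepticRelations (θ ^ 5 * u) (θ ^ 6 * v) (θ ^ 3 * y) w where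
  mul_eq := by linear_combination (θ ^ 7 + 1) * u * v * y * hθ + h.mul_eq
  rel_u := by
    linear_combination (θ ^ 5 * v ^ 2 * w + θ ^ 5 * v * y ^ 2) * hθ + θ ^ 5 * h.rel_u
  rel_v := by linear_combination θ ^ 6 * y * u ^ 2 * hθ + θ ^ 6 * h.rel_v
  rel_y := by
    linear_combination (θ ^ 3 * u ^ 2 * w + (θ ^ 10 + θ ^ 3) * u * v ^ 2) * hθ + θ ^ 3 * h.rel_y

lemma esymm_two_sq_eq (h : SepticRelations u v y w) :
    (u * v + v * y + y * u) ^ 2 = (u * v + v * y + y * u) * (3 * (u + v + y) * w - w ^ 2)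
      - (u + v + y) ^ 3 * w + 2 * (u + v + y) * w ^ 3 - 3 * w ^ 4 := by
  linear_combination
    v * h.rel_u + y * h.rel_v + u * h.rel_y + (2 * (u + v + y) - 3 * w) * h.mul_eq

lemma kleinForm_eq (h : SepticRelations u v y w) :
    kleinForm u v y w =
      -(u * v + v * y + y * u) * ((u + v + y) ^ 2 - 5 * (u + v + y) * w + w ^ 2)
        - (2 * w * (u + v + y) ^ 3 + (u + v + y) ^ 2 * w ^ 2 - 4 * (u + v + y) * w ^ 3
          + 11 * w ^ 4) := by
  rw [kleinForm]
  linear_combination (u + v + y) * (h.rel_u + h.rel_v + h.rel_y) + h.esymm_two_sq_eq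
    + 2 * (u + v + y) * h.mul_eq

-- `kleinForm_eq` is linear in the second elementary symmetric function of `u, v, y`, so it
-- eliminates this function from the quadratic relation `esymm_two_sq_eq`.
lemma eval_septic_eq_zero (h : SepticRelations u v y w) :
    (septic w (kleinForm u v y w)).eval (u + v + y + w) = 0 := by
  have hf := h.esymm_two_sq_eq
  have hS := h.kleinForm_eq
  rw [eval_septic]
  generalize kleinForm u v y w = S at *
  generalize u * v + v * y + y * u = f at *
  generalize u + v + y = e at *
  linear_combination
    (S + (2 * w * e ^ 3 + e ^ 2 * w ^ 2 - 4 * e * w ^ 3 + 11 * w ^ 4)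
      + (e ^ 2 - 5 * e * w + w ^ 2) * (3 * e * w - w ^ 2 - f)) * hS
    + (e ^ 2 - 5 * e * w + w ^ 2) ^ 2 * hf

end SepticRelations

-- Squaring separates the terms of odd and even degree in `e`, leaving only powers of
-- `w ^ 2 * e ^ 2`, `w ^ 4`, `e ^ 4` and `S`.
lemma sq_mul_sq_mul_eq_of_eval_septic {S e : R} (h : (septic w S).eval e = 0) :
    w ^ 2 * e ^ 2 * (117649 * (w ^ 4) ^ 3 + 33614 * S * (w ^ 4) ^ 2 + 3087 * S ^ 2 * w ^ 4
        + 70 * S ^ 3 + (2401 * (w ^ 4) ^ 2 + 686 * S * w ^ 4 + 63 * S ^ 2) * e ^ 4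
        + (49 * w ^ 4 + 14 * S) * e ^ 8 + e ^ 12) =
      S ^ 4 + (16807 * (w ^ 4) ^ 3 + 4802 * S * (w ^ 4) ^ 2 + 441 * S ^ 2 * w ^ 4) * e ^ 4
        + (343 * (w ^ 4) ^ 2 + 98 * S * w ^ 4) * e ^ 8 + 7 * w ^ 4 * e ^ 12 := by
  have hparity : e * (w * e ^ 6 + 21 * w ^ 3 * e ^ 4 + (147 * w ^ 5 + 7 * w * S) * e ^ 2
        + 343 * w ^ 7 + 49 * w ^ 3 * S) =
      7 * w ^ 2 * e ^ 6 + 49 * w ^ 4 * e ^ 4 + (343 * w ^ 6 + 35 * w ^ 2 * S) * e ^ 2 - S ^ 2 := by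
    rw [eval_septic] at h
    linear_combination h
  linear_combination congrArg (· ^ 2) hparity

theorem modular_equation_of_eval_septic [IsDomain R] {e t T : R} (he : e ≠ 0) (ht : t ≠ 0)
    (hseptic : (septic w (t * e ^ 4)).eval e = 0) (hw : w ^ 4 = T * (t * e ^ 4)) :
    t ^ 7 = ∑ l ∈ Finset.range 7, aPoly l T * t ^ l := by
  set p := 117649 * T ^ 3 * t ^ 3 + 33614 * T ^ 2 * t ^ 3 + 3087 * T * t ^ 3 + 70 * t ^ 3
    + 2401 * T ^ 2 * t ^ 2 + 686 * T * t ^ 2 + 63 * t ^ 2 + 49 * T * t + 14 * t + 1 with hp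
  set r := t ^ 3 + 16807 * T ^ 3 * t ^ 2 + 4802 * T ^ 2 * t ^ 2 + 441 * T * t ^ 2
    + 343 * T ^ 2 * t + 98 * T * t + 7 * T with hr
  have hpr : w ^ 2 * p = t * e ^ 2 * r := by
    have h := sq_mul_sq_mul_eq_of_eval_septic hseptic
    rw [hw] at h
    refine mul_left_cancel₀ (pow_ne_zero 14 he) ?_
    linear_combination h
  have hsq : T * p ^ 2 = t * r ^ 2 := by
    refine mul_left_cancel₀ (mul_ne_zero ht (pow_ne_zero 4 he)) ?_
    linear_combination congrArg (· ^ 2) hpr - p ^ 2 * hw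
  simp only [Finset.sum_range_succ, Finset.sum_range_zero, aPoly]
  rw [hp, hr] at hsq
  linear_combination -hsq

end Septic

/-! ### Dissection of power series by residue classes of exponents -/

section Dissection

open PowerSeries

variable {R : Type*} [CommRing R] {N : ℕ}

/-- The part of a power series consisting of the terms with exponent congruent to `r` modulo `N`. -/
def dissect (r : ZMod N) (f : R⟦X⟧) : R⟦X⟧ :=
  mk fun n => if (n : ZMod N) = r then coeff n f else 0

lemma coeff_dissect (r : ZMod N) (f : R⟦X⟧) (n : ℕ) :
    coeff n (dissect r f) = if (n : ZMod N) = r then coeff n f else 0 :=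
  coeff_mk n _

lemma map_dissect {A : Type*} [CommRing A] (φ : R →+* A) (r : ZMod N) (f : R⟦X⟧) :
    map φ (dissect r f) = dissect r (map φ f) := by
  ext n
  simp only [coeff_map, coeff_dissect, apply_ite φ, map_zero]

lemma rescale_dissect {ζ : R} (hζ : ζ ^ N = 1) (r : ℕ) (f : R⟦X⟧) :
    rescale ζ (dissect (r : ZMod N) f) = C (ζ ^ r) * dissect (r : ZMod N) f := by
  ext n
  rw [coeff_rescale, coeff_C_mul, coeff_dissect]
  split_ifs with h
  · rw [pow_eq_pow_of_modEq ((ZMod.natCast_eq_natCast_iff n r N).1 h) hζ]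
  · simp only [mul_zero]

lemma sum_dissect [NeZero N] (f : R⟦X⟧) : ∑ r : ZMod N, dissect r f = f := by
  ext n
  simp only [map_sum, coeff_dissect, Finset.sum_ite_eq, Finset.mem_univ, if_true]

lemma dissect_mul [NeZero N] (r : ZMod N) (f g : R⟦X⟧) :
    dissect r (f * g) = ∑ s, dissect s f * dissect (r - s) g := by
  ext n
  simp only [map_sum, coeff_mul, coeff_dissect, ite_mul, zero_mul]
  simp only [Finset.sum_comm (s := Finset.univ), Finset.sum_ite_eq, Finset.mem_univ, if_true]
  rw [Finset.ite_sum_zero]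
  refine Finset.sum_congr rfl fun p hp => ?_
  have hn : ((p.2 : ZMod N) = r - p.1) ↔ (n : ZMod N) = r := by
    rw [← Finset.HasAntidiagonal.mem_antidiagonal.1 hp, eq_sub_iff_add_eq', Nat.cast_add]
  simp only [hn, mul_ite, mul_zero]

lemma dissect_pow_three [NeZero N] (r : ZMod N) (f : R⟦X⟧) :
    dissect r (f ^ 3) = ∑ s, (∑ t, dissect t f * dissect (s - t) f) * dissect (r - s) f := by
  simp only [pow_succ _ 2, sq, dissect_mul]

/-- `f` is the series `∑ a k * X ^ g k`, expressed through coefficients; meant for injective `g`. -/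
structure IsLacunary {ι : Type*} (f : R⟦X⟧) (g : ι → ℕ) (a : ι → R) : Prop where
  coeff_eq (k : ι) : coeff (g k) f = a k
  coeff_eq_zero {n : ℕ} (hn : n ∉ Set.range g) : coeff n f = 0

namespace IsLacunary

variable {ι : Type*} {f : R⟦X⟧} {g : ι → ℕ} {a : ι → R}

lemma of_modXPow (hg : Function.Injective g) (s : ℕ → Finset ι) (hs : ∀ n k, g k ≤ n → k ∈ s n)
    (hf : ∀ n, modXPow (n + 1) f = modXPow (n + 1) (∑ k ∈ s n, C (a k) * X ^ g k)) :
    IsLacunary f g a := by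
  have hcoeff (n : ℕ) : coeff n f = ∑ k ∈ s n, if n = g k then a k else 0 := by
    rw [modXPow_eq_iff.1 (hf n) n n.lt_succ_self, map_sum]
    simp only [coeff_C_mul_X_pow]
  refine ⟨fun k => ?_, fun {n} hn => ?_⟩
  · classical
    simp only [hcoeff, hg.eq_iff]
    rw [Finset.sum_ite_eq, if_pos (hs (g k) k le_rfl)]
  · rw [hcoeff]
    exact Finset.sum_eq_zero fun k _ => if_neg fun h => hn ⟨k, h.symm⟩

lemma dissect_eq_zero (hf : IsLacunary f g a) {r : ZMod N} (hr : ∀ k, (g k : ZMod N) ≠ r) :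
    dissect r f = 0 := by
  ext n
  rw [coeff_dissect, map_zero, ite_eq_right_iff]
  rintro rfl
  exact hf.coeff_eq_zero fun ⟨k, hk⟩ => hr k (by rw [hk])

theorem dissect_eq_mul_expand (hf : IsLacunary f g a) (σ : ι → ι) {c : R} {d e : ℕ} (hd : d ≠ 0)
    (hdN : (d : ZMod N) = 0) (hg : ∀ k, g (σ k) = d * g k + e) (ha : ∀ k, a (σ k) = c * a k)
    (hσ : ∀ k, (g k : ZMod N) = e → k ∈ Set.range σ) :
    dissect (e : ZMod N) f = C c * X ^ e * expand d hd f := by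
  have hrange {n : ℕ} (hn : n ∈ Set.range g) (hne : (n : ZMod N) = e) :
      ∃ k, n = d * g k + e := by
    obtain ⟨k, rfl⟩ := hn
    obtain ⟨k, rfl⟩ := hσ k hne
    exact ⟨k, hg k⟩
  ext n
  rw [coeff_dissect, mul_assoc, coeff_C_mul, coeff_X_pow_mul']
  by_cases hn : ∃ m, n = d * m + e
  · obtain ⟨m, rfl⟩ := hn
    rw [if_pos (by simp [hdN]), if_pos (Nat.le_add_left e _), Nat.add_sub_cancel, coeff_expand_mul]
    by_cases hm : m ∈ Set.range g
    · obtain ⟨k, rfl⟩ := hm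
      rw [← hg, hf.coeff_eq, hf.coeff_eq, ha]
    · rw [hf.coeff_eq_zero hm, mul_zero]
      refine hf.coeff_eq_zero fun hmem => hm ?_
      obtain ⟨k, hk⟩ := hrange hmem (by simp [hdN])
      exact ⟨k, Nat.eq_of_mul_eq_mul_left (Nat.pos_of_ne_zero hd) (by lia)⟩
  · have hleft : (if (n : ZMod N) = e then coeff n f else 0) = 0 := by
      refine ite_eq_right_iff.2 fun hne => hf.coeff_eq_zero fun hmem => hn ?_
      obtain ⟨k, hk⟩ := hrange hmem hne
      exact ⟨g k, hk⟩
    have hright : (if e ≤ n then coeff (n - e) (expand d hd f) else 0) = 0 := by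
      refine ite_eq_right_iff.2 fun hen => coeff_expand_of_not_dvd d hd f fun ⟨m, hm⟩ => hn ⟨m, ?_⟩
      lia
    rw [hleft, hright, mul_zero]

end IsLacunary

end Dissection

/-! ### The parts of Euler's product modulo seven -/

section EulerProduct

open PowerSeries

theorem isLacunary_J_one : IsLacunary (J 1) pentagonal fun k => (k.negOnePow : ℤ) where
  coeff_eq k := by rw [J_one_eq_pentagonalSeries, coeff_pentagonalSeries_pentagonal, Int.cast_id]
  coeff_eq_zero hn := by rw [J_one_eq_pentagonalSeries, coeff_pentagonalSeries_eq_zero ℤ hn]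

theorem isLacunary_J_one_pow_three :
    IsLacunary (J 1 ^ 3) (fun m : ℕ => (m + 1).choose 2) fun m => (-1) ^ m * (2 * (m : ℤ) + 1) := by
  have hmono : StrictMono fun m : ℕ => (m + 1).choose 2 := strictMono_nat_of_lt_succ fun m => by
    rw [Nat.choose_succ_succ' (m + 1), Nat.choose_one_right]
    lia
  refine .of_modXPow hmono.injective (fun n => Finset.range (2 * n + 1)) (fun n m hm => ?_)
    modXPow_J_one_pow_three
  have hle : m ≤ (m + 1).choose 2 := hmono.le_apply
  exact Finset.mem_range.2 (by lia)

lemma two_mul_pentagonal_cast {R : Type*} [CommRing R] (k : ℤ) :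
    2 * (pentagonal k : R) = k * (3 * k - 1) := by
  exact_mod_cast congrArg (Int.cast : ℤ → R) (two_mul_natCast_pentagonal k)

lemma two_mul_succ_choose_two_cast {R : Type*} [CommRing R] (m : ℕ) :
    2 * ((m + 1).choose 2 : R) = (m + 1) * m := by
  exact_mod_cast congrArg (Nat.cast : ℕ → R) (two_mul_succ_choose_two m)

lemma dissect_J_one_eq_zero {r : ZMod 7} (hr : ∀ x : ZMod 7, x * (3 * x - 1) ≠ 2 * r) :
    dissect r (J 1) = 0 :=
  isLacunary_J_one.dissect_eq_zero fun k hk => hr k (by rw [← two_mul_pentagonal_cast, hk])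

lemma dissect_J_one_pow_three_eq_zero {r : ZMod 7} (hr : ∀ x : ZMod 7, (x + 1) * x ≠ 2 * r) :
    dissect r (J 1 ^ 3) = 0 :=
  isLacunary_J_one_pow_three.dissect_eq_zero fun m hm =>
    hr m (by rw [← two_mul_succ_choose_two_cast, hm])

lemma dissect_two_J_one : dissect (2 : ZMod 7) (J 1) = -(X ^ 2 * J 49) := by
  have hpent (k : ℤ) : pentagonal (7 * k - 1) = 49 * pentagonal k + 2 := by
    have hk := two_mul_natCast_pentagonal k
    have h7k := two_mul_natCast_pentagonal (7 * k - 1)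
    zify
    linarith
  have hsign (k : ℤ) : ((7 * k - 1).negOnePow : ℤ) = -1 * (k.negOnePow : ℤ) := by
    rw [show 7 * k - 1 = k + (2 * (3 * k - 1) + 1) by ring, Int.negOnePow_add,
      Int.negOnePow_odd _ (odd_two_mul_add_one _)]
    simp
  have hclass : ∀ x : ZMod 7, x * (3 * x - 1) = 2 * 2 → x = -1 := by decide
  have hmem (k : ℤ) (hk : (pentagonal k : ZMod 7) = (2 : ℕ)) :
      k ∈ Set.range fun k : ℤ => 7 * k - 1 := by
    have hk' : ((k + 1 : ℤ) : ZMod 7) = 0 := by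
      rw [Int.cast_add, hclass k (by rw [← two_mul_pentagonal_cast, hk, Nat.cast_two]),
        Int.cast_one, neg_add_cancel]
    obtain ⟨m, hm⟩ := (ZMod.intCast_zmod_eq_zero_iff_dvd _ 7).1 hk'
    exact ⟨m, by push_cast at hm; linarith⟩
  have h := isLacunary_J_one.dissect_eq_mul_expand (N := 7) (d := 49) _ (by norm_num) rfl hpent
    hsign hmem
  rw [expand_J one_ne_zero, map_neg, map_one, Nat.cast_two] at h
  linear_combination h

lemma dissect_six_J_one_pow_three :
    dissect (6 : ZMod 7) (J 1 ^ 3) = -7 * (X ^ 6 * J 49 ^ 3) := by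
  have hchoose (m : ℕ) : (7 * m + 3 + 1).choose 2 = 49 * (m + 1).choose 2 + 6 := by
    linarith [two_mul_succ_choose_two m, two_mul_succ_choose_two (7 * m + 3)]
  have hcoeff (m : ℕ) : (-1 : ℤ) ^ (7 * m + 3) * (2 * ((7 * m + 3 : ℕ) : ℤ) + 1) =
      -7 * ((-1) ^ m * (2 * m + 1)) := by
    rw [show 7 * m + 3 = m + (2 * (3 * m + 1) + 1) by ring, pow_add,
      (odd_two_mul_add_one _).neg_one_pow]
    push_cast
    ring
  have hclass : ∀ x : ZMod 7, (x + 1) * x = 2 * 6 → x = 3 := by decide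
  have hmem (m : ℕ) (hm : ((m + 1).choose 2 : ZMod 7) = (6 : ℕ)) :
      m ∈ Set.range fun m : ℕ => 7 * m + 3 := by
    have hm' : (m : ZMod 7) = (3 : ℕ) :=
      hclass m (by rw [← two_mul_succ_choose_two_cast, hm, Nat.cast_ofNat])
    have hmod : m % 7 = 3 := (ZMod.natCast_eq_natCast_iff' m 3 7).1 hm'
    exact ⟨m / 7, by lia⟩
  have h := isLacunary_J_one_pow_three.dissect_eq_mul_expand (N := 7) (d := 49) _ (by norm_num) rfl
    hchoose hcoeff hmem
  rw [map_pow, expand_J one_ne_zero, map_neg, map_ofNat, Nat.cast_ofNat] at h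
  linear_combination h

lemma sum_univ_zmod_seven {M : Type*} [AddCommMonoid M] (f : ZMod 7 → M) :
    ∑ r, f r = f 0 + f 1 + f 2 + f 3 + f 4 + f 5 + f 6 :=
  Fin.sum_univ_seven f

theorem septicRelations_dissect {R : Type*} [CommRing R] [IsDomain R] [CharZero R] {f : R⟦X⟧}
    (h3 : dissect (3 : ZMod 7) f = 0) (h4 : dissect (4 : ZMod 7) f = 0)
    (h6 : dissect (6 : ZMod 7) f = 0) (hcube2 : dissect (2 : ZMod 7) (f ^ 3) = 0)
    (hcube4 : dissect (4 : ZMod 7) (f ^ 3) = 0) (hcube5 : dissect (5 : ZMod 7) (f ^ 3) = 0)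
    (hcube6 : dissect (6 : ZMod 7) (f ^ 3) = 7 * dissect (2 : ZMod 7) f ^ 3) :
    SepticRelations (dissect (0 : ZMod 7) f) (dissect (1 : ZMod 7) f) (dissect (5 : ZMod 7) f)
      (dissect (2 : ZMod 7) f) := by
  simp only [dissect_pow_three, sum_univ_zmod_seven] at hcube2 hcube4 hcube5 hcube6
  reduce_mod_char at hcube2 hcube4 hcube5 hcube6
  simp only [h3, h4, h6, mul_zero, zero_mul, add_zero, zero_add] at hcube2 hcube4 hcube5 hcube6
  have hchar : CharZero R⟦X⟧ := charZero_of_injective_ringHom C_injective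
  constructor
  · refine mul_left_cancel₀ (by norm_num : (6 : R⟦X⟧) ≠ 0) ?_
    linear_combination hcube6
  all_goals refine mul_left_cancel₀ (by norm_num : (3 : R⟦X⟧) ≠ 0) ?_
  · linear_combination hcube4
  · linear_combination hcube5
  · linear_combination hcube2

lemma J_one_eq_sum_dissect :
    J 1 = dissect (0 : ZMod 7) (J 1) + dissect (1 : ZMod 7) (J 1) + dissect (5 : ZMod 7) (J 1)
      + dissect (2 : ZMod 7) (J 1) := by
  conv_lhs => rw [← sum_dissect (N := 7) (J 1), sum_univ_zmod_seven,
    dissect_J_one_eq_zero (r := 3) (by decide), dissect_J_one_eq_zero (r := 4) (by decide),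
    dissect_J_one_eq_zero (r := 6) (by decide)]
  ring

theorem septicRelations_dissect_J_one :
    SepticRelations (dissect (0 : ZMod 7) (J 1)) (dissect (1 : ZMod 7) (J 1))
      (dissect (5 : ZMod 7) (J 1)) (dissect (2 : ZMod 7) (J 1)) := by
  refine septicRelations_dissect (dissect_J_one_eq_zero (by decide))
    (dissect_J_one_eq_zero (by decide)) (dissect_J_one_eq_zero (by decide))
    (dissect_J_one_pow_three_eq_zero (by decide)) (dissect_J_one_pow_three_eq_zero (by decide))
    (dissect_J_one_pow_three_eq_zero (by decide)) ?_
  rw [dissect_six_J_one_pow_three, dissect_two_J_one]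
  ring

end EulerProduct

/-! ### Products over rotations of the variable by roots of unity -/

section RootNorm

open PowerSeries

lemma prod_range_mul_ite_dvd {M : Type*} [CommMonoid M] {p : ℕ} (hp : p ≠ 0) (f : ℕ → M) (m : ℕ) :
    ∏ k ∈ Finset.range (p * m), (if p ∣ k + 1 then f (k + 1) else 1) =
      ∏ k ∈ Finset.range m, f (p * (k + 1)) := by
  induction m with
  | zero => rfl
  | succ m ih =>
    obtain ⟨r, rfl⟩ := Nat.exists_eq_add_one_of_ne_zero hp
    have hblock : ∀ k ∈ Finset.range r, ¬ r + 1 ∣ (r + 1) * m + k + 1 := fun k hk h =>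
      have hk' : k < r := Finset.mem_range.1 hk
      Nat.not_dvd_of_pos_of_lt k.succ_pos (by lia)
        ((Nat.dvd_add_right (dvd_mul_right (r + 1) m)).1 h)
    rw [mul_add_one, Finset.prod_range_add, ih, Finset.prod_range_succ _ r,
      Finset.prod_congr rfl fun k hk => if_neg (hblock k hk), Finset.prod_const_one, one_mul,
      add_assoc, ← mul_add_one, if_pos (dvd_mul_right _ _), Finset.prod_range_succ]

variable {A : Type*} [CommRing A] {p : ℕ} {ζ : A}

/-- The product of the series `f (ζ ^ i * X)` for `i < p`. When `ζ` is a primitive `p`-th root of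
unity, this is the norm of `f` down to the series in `X ^ p`. -/
def rootNorm (p : ℕ) (ζ : A) : A⟦X⟧ →* A⟦X⟧ :=
  ∏ i ∈ Finset.range p, (rescale (ζ ^ i) : A⟦X⟧ →* A⟦X⟧)

lemma rootNorm_apply (p : ℕ) (ζ : A) (f : A⟦X⟧) :
    rootNorm p ζ f = ∏ i ∈ Finset.range p, rescale (ζ ^ i) f :=
  MonoidHom.finsetProd_apply _ _ _

lemma rescale_one_sub_X_pow (a : A) (n : ℕ) :
    rescale a (1 - X ^ n) = 1 - C (a ^ n) * X ^ n := by
  rw [map_sub, map_one, map_pow, rescale_X, mul_pow, map_pow]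

lemma modXPow_rootNorm {n : ℕ} {f g : A⟦X⟧} (h : modXPow n f = modXPow n g) :
    modXPow n (rootNorm p ζ f) = modXPow n (rootNorm p ζ g) := by
  simp only [rootNorm_apply, map_prod]
  exact Finset.prod_congr rfl fun i _ => modXPow_rescale _ h

lemma rootNorm_one_sub_X_pow_of_dvd (hζ : ζ ^ p = 1) {n : ℕ} (hn : p ∣ n) :
    rootNorm p ζ (1 - X ^ n) = (1 - X ^ n) ^ p := by
  have hfactor (i : ℕ) : rescale (ζ ^ i) (1 - X ^ n) = 1 - X ^ n := by
    obtain ⟨d, rfl⟩ := hn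
    rw [rescale_one_sub_X_pow, ← pow_mul, mul_left_comm, pow_mul, hζ, one_pow, map_one, one_mul]
  simp only [rootNorm_apply, hfactor, Finset.prod_const, Finset.card_range]

variable [IsDomain A]

lemma prod_range_one_sub_pow_mul (hp : 0 < p) (hζ : IsPrimitiveRoot ζ p) (x : A) :
    ∏ i ∈ Finset.range p, (1 - ζ ^ i * x) = 1 - x ^ p := by
  have hroots : (Polynomial.nthRootsFinset p (1 : A)).val =
      (Finset.range p).val.map fun i => ζ ^ i := by
    classical
    rw [Polynomial.nthRootsFinset_def, Multiset.toFinset_val, hζ.nthRoots_one_nodup.dedup,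
      hζ.nthRoots_eq (one_pow p), Finset.range_val]
    simp only [mul_one]
  rw [← one_pow p, hζ.pow_sub_pow_eq_prod_sub_mul 1 x hp, Finset.prod, Finset.prod, hroots,
    Multiset.map_map]
  simp only [Function.comp_def, one_pow]

lemma rootNorm_one_sub_X_pow_of_coprime (hp : 0 < p) (hζ : IsPrimitiveRoot ζ p) {n : ℕ}
    (hn : n.Coprime p) :
    rootNorm p ζ (1 - X ^ n) = 1 - X ^ (p * n) := by
  have hroot : IsPrimitiveRoot (C (ζ ^ n)) p :=
    (hζ.pow_of_coprime n hn).map_of_injective C_injective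
  rw [rootNorm_apply, mul_comm p n, pow_mul, ← prod_range_one_sub_pow_mul hp hroot]
  refine Finset.prod_congr rfl fun i _ => ?_
  rw [rescale_one_sub_X_pow, ← pow_mul, mul_comm i n, pow_mul, map_pow]

lemma rootNorm_qPoch_mul_qPoch (hp : p.Prime) (hζ : IsPrimitiveRoot ζ p) (m : ℕ) :
    rootNorm p ζ (qPoch X (p * m)) * qPoch (X ^ (p ^ 2)) m =
      qPoch (X ^ p) (p * m) * qPoch (X ^ p) m ^ p := by
  have hfactor (n : ℕ) :
      rootNorm p ζ (1 - X ^ n) * (if p ∣ n then 1 - X ^ (p * n) else 1) =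
        (1 - X ^ (p * n)) * (if p ∣ n then (1 - X ^ n) ^ p else 1) := by
    split_ifs with hn
    · rw [rootNorm_one_sub_X_pow_of_dvd hζ.pow_eq_one hn, mul_comm]
    · rw [rootNorm_one_sub_X_pow_of_coprime hp.pos hζ (hp.coprime_iff_not_dvd.2 hn).symm]
  have hprod := Finset.prod_congr (rfl : Finset.range (p * m) = _) fun k _ => hfactor (k + 1)
  rw [Finset.prod_mul_distrib, Finset.prod_mul_distrib, ← map_prod,
    prod_range_mul_ite_dvd hp.ne_zero fun n => (1 : A⟦X⟧) - X ^ (p * n),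
    prod_range_mul_ite_dvd hp.ne_zero fun n => ((1 : A⟦X⟧) - X ^ n) ^ p,
    Finset.prod_pow] at hprod
  simpa only [qPoch, ← pow_mul, sq, mul_assoc] using hprod

theorem rootNorm_map_J_one_mul (hp : p.Prime) (hζ : IsPrimitiveRoot ζ p) (φ : ℤ →+* A) :
    rootNorm p ζ (map φ (J 1)) * map φ (J (p ^ 2)) = map φ (J p) ^ (p + 1) := by
  refine eq_of_forall_modXPow_eq fun n => ?_
  have hJ {b m : ℕ} (hb : b ≠ 0) (h : n ≤ m) :
      modXPow (n + 1) (map φ (J b)) = modXPow (n + 1) (qPoch (X ^ b) m) := by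
    rw [modXPow_map φ (modXPow_J hb h), map_qPoch, map_pow, map_X]
  have hn : n ≤ p * n := Nat.le_mul_of_pos_left n hp.pos
  rw [map_mul, modXPow_rootNorm (hJ one_ne_zero hn), hJ (pow_ne_zero 2 hp.ne_zero) le_rfl, pow_one,
    ← map_mul, rootNorm_qPoch_mul_qPoch hp hζ, map_mul, map_pow, ← hJ hp.ne_zero hn,
    ← hJ hp.ne_zero le_rfl, ← map_pow, ← map_mul, pow_succ' _ p]

end RootNorm

/-! ### The Klein form of the parts of Euler's product -/

section KleinDissect

lemma coeff_zero_eq_coeff_card_mul_prod_neg {R ι : Type*} [CommRing R] [IsDomain R]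
    {s : Finset ι} {v : ι → R} (hv : Set.InjOn v s) {P : Polynomial R}
    (hdeg : P.natDegree ≤ s.card) (hroot : ∀ i ∈ s, P.eval (v i) = 0) :
    P.coeff 0 = P.coeff s.card * ∏ i ∈ s, -v i := by
  have hcoeff : (Lagrange.nodal s v).coeff s.card = 1 := by
    simpa only [Lagrange.natDegree_nodal] using
      (Lagrange.nodal_monic (s := s) (v := v)).coeff_natDegree
  have hP : P = Polynomial.C (P.coeff s.card) * Lagrange.nodal s v := by
    refine Polynomial.eq_of_degree_sub_lt_of_eval_index_eq s hv ?_ fun i hi => ?_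
    · refine (Polynomial.degree_lt_iff_coeff_zero _ _).2 fun m hm => ?_
      rw [Polynomial.coeff_sub, Polynomial.coeff_C_mul]
      obtain rfl | hlt := hm.eq_or_lt
      · rw [hcoeff, mul_one, sub_self]
      · rw [Polynomial.coeff_eq_zero_of_natDegree_lt (hdeg.trans_lt hlt),
          Polynomial.coeff_eq_zero_of_natDegree_lt (Lagrange.natDegree_nodal.trans_lt hlt),
          mul_zero, sub_zero]
    · rw [hroot i hi, Polynomial.eval_mul, Lagrange.eval_nodal_at_node hi, mul_zero]
  calc P.coeff 0 = (Polynomial.C (P.coeff s.card) * Lagrange.nodal s v).eval 0 := by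
        rw [← hP, Polynomial.coeff_zero_eq_eval_zero]
    _ = P.coeff s.card * ∏ i ∈ s, -v i := by
        simp only [Polynomial.eval_mul, Polynomial.eval_C, Lagrange.eval_nodal, zero_sub]

open PowerSeries

variable {A : Type*} [CommRing A]

/-- The Klein form of the parts of `f` with exponents `0, 1, 5, 2` modulo `7`. -/
def kleinDissect (f : A⟦X⟧) : A⟦X⟧ :=
  kleinForm (dissect (0 : ZMod 7) f) (dissect (1 : ZMod 7) f) (dissect (5 : ZMod 7) f)
    (dissect (2 : ZMod 7) f)

/-- `f` has only exponents `0, 1, 2, 5` modulo `7` and its parts satisfy the relations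
`SepticRelations`; Euler's product `J 1` is the motivating example. -/
structure HasSepticDissection (f : A⟦X⟧) : Prop where
  eq_sum : f = dissect (0 : ZMod 7) f + dissect (1 : ZMod 7) f + dissect (5 : ZMod 7) f
    + dissect (2 : ZMod 7) f
  relations : SepticRelations (dissect (0 : ZMod 7) f) (dissect (1 : ZMod 7) f)
    (dissect (5 : ZMod 7) f) (dissect (2 : ZMod 7) f)

lemma map_kleinDissect {R : Type*} [CommRing R] (φ : R →+* A) (f : R⟦X⟧) :
    map φ (kleinDissect f) = kleinDissect (map φ f) := by
  simp only [kleinDissect, map_kleinForm, map_dissect]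

namespace HasSepticDissection

variable {f : A⟦X⟧} {ζ : A}

protected lemma map {R : Type*} [CommRing R] (φ : R →+* A) {f : R⟦X⟧}
    (hf : HasSepticDissection f) : HasSepticDissection (map φ f) where
  eq_sum := by simpa only [map_add, map_dissect] using congrArg (map φ) hf.eq_sum
  relations := by simpa only [map_dissect] using hf.relations.map (map φ)

lemma eval_septic_eq_zero (hf : HasSepticDissection f) :
    (septic (dissect (2 : ZMod 7) f) (kleinDissect f)).eval f = 0 := by
  conv in Polynomial.eval f => rw [hf.eq_sum]
  exact hf.relations.eval_septic_eq_zero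

-- The factor `ζ ^ 5` keeps the part `dissect 2 f` fixed, so that all these series are roots of the
-- same septic polynomial.
lemma eval_septic_mul_rescale_eq_zero (hf : HasSepticDissection f) (hζ : ζ ^ 7 = 1) :
    (septic (dissect (2 : ZMod 7) f) (kleinDissect f)).eval (C (ζ ^ 5) * rescale ζ f) = 0 := by
  have hC : C ζ ^ 7 = 1 := by rw [← map_pow, hζ, map_one]
  have hrotate : C (ζ ^ 5) * rescale ζ f =
      C ζ ^ 5 * dissect (0 : ZMod 7) f + C ζ ^ 6 * dissect (1 : ZMod 7) f
        + C ζ ^ 3 * dissect (5 : ZMod 7) f + dissect (2 : ZMod 7) f := by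
    have h0 := rescale_dissect hζ 0 f
    have h1 := rescale_dissect hζ 1 f
    have h2 := rescale_dissect hζ 2 f
    have h5 := rescale_dissect hζ 5 f
    push_cast at h0 h1 h2 h5
    conv_lhs => rw [hf.eq_sum]
    simp only [map_add, map_pow, h0, h1, h2, h5]
    linear_combination (dissect (2 : ZMod 7) f + C ζ ^ 3 * dissect (5 : ZMod 7) f) * hC
  rw [hrotate, kleinDissect, ← kleinForm_twist hC]
  exact (hf.relations.twist hC).eval_septic_eq_zero

theorem kleinDissect_sq_eq [IsDomain A] (hf : HasSepticDissection f)
    (hf0 : constantCoeff f ≠ 0) (hζ : IsPrimitiveRoot ζ 7) :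
    kleinDissect f ^ 2 = -dissect (2 : ZMod 7) f * rootNorm 7 ζ f := by
  set root : ℕ → A⟦X⟧ := fun i => C ((ζ ^ i) ^ 5) * rescale (ζ ^ i) f with hroot_def
  have hroot (i : ℕ) :
      (septic (dissect (2 : ZMod 7) f) (kleinDissect f)).eval (root i) = 0 :=
    hf.eval_septic_mul_rescale_eq_zero (by rw [pow_right_comm, hζ.pow_eq_one, one_pow])
  have hinj : Set.InjOn root (Finset.range 7) := by
    intro i hi j hj hij
    have hconst := congrArg constantCoeff hij
    simp only [hroot_def, map_mul, ← coeff_zero_eq_constantCoeff_apply, coeff_zero_C,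
      coeff_rescale, pow_zero, one_mul] at hconst hf0
    have hpow := mul_right_cancel₀ hf0 hconst
    rw [pow_right_comm, pow_right_comm ζ j] at hpow
    exact (hζ.pow_of_coprime 5 (by norm_num)).pow_inj (Finset.mem_range.1 hi)
      (Finset.mem_range.1 hj) hpow
  have hprod : ∏ i ∈ Finset.range 7, C ((ζ ^ i) ^ 5) = (1 : A⟦X⟧) := by
    rw [← map_prod, Finset.prod_pow, Finset.prod_pow_eq_pow_sum, ← pow_mul,
      show (∑ i ∈ Finset.range 7, i) * 5 = 7 * 15 from rfl, pow_mul, hζ.pow_eq_one, one_pow,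
      map_one]
  have hvieta := coeff_zero_eq_coeff_card_mul_prod_neg hinj
    (natDegree_septic_le (dissect (2 : ZMod 7) f) (kleinDissect f)) fun i _ => hroot i
  rw [coeff_septic_zero, Finset.card_range, coeff_septic_seven, Finset.prod_neg,
    Finset.prod_mul_distrib, hprod, ← rootNorm_apply, Finset.card_range] at hvieta
  linear_combination hvieta

end HasSepticDissection

lemma hasSepticDissection_J_one : HasSepticDissection (J 1) :=
  ⟨J_one_eq_sum_dissect, septicRelations_dissect_J_one⟩

theorem kleinDissect_J_one_sq : kleinDissect (J 1) ^ 2 = (X * J 7 ^ 4) ^ 2 := by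
  set φ : ℤ →+* ℂ := Int.castRingHom ℂ
  have hζ : IsPrimitiveRoot _ 7 := Complex.isPrimitiveRoot_exp 7 (by norm_num)
  have hconst : constantCoeff (map φ (J 1)) ≠ 0 := by
    rw [← coeff_zero_eq_constantCoeff_apply, coeff_map, coeff_zero_eq_constantCoeff_apply,
      constantCoeff_J one_ne_zero, map_one]
    exact one_ne_zero
  have hsq := (hasSepticDissection_J_one.map φ).kleinDissect_sq_eq hconst hζ
  have hnorm := rootNorm_map_J_one_mul (by norm_num) hζ φ
  rw [← map_dissect, dissect_two_J_one] at hsq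
  refine map_injective φ Int.cast_injective ?_
  simp only [map_neg, map_mul, map_pow, map_kleinDissect, map_X] at hsq hnorm ⊢
  linear_combination hsq + X ^ 2 * hnorm

lemma modXPow_two_kleinDissect_J_one : modXPow 2 (kleinDissect (J 1)) = modXPow 2 X := by
  have hcoeff0 : coeff 0 (J 1) = 1 := isLacunary_J_one.coeff_eq 0
  have hcoeff1 : coeff 1 (J 1) = -1 := isLacunary_J_one.coeff_eq 1
  have hpart (r : ZMod 7) {g : ℤ⟦X⟧} (h0 : (if 0 = r then 1 else 0) = coeff 0 g)
      (h1 : (if 1 = r then -1 else 0) = coeff 1 g) : modXPow 2 (dissect r (J 1)) = modXPow 2 g := by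
    refine modXPow_eq_iff.2 fun i hi => ?_
    rw [coeff_dissect]
    interval_cases i
    · rw [hcoeff0, ← h0, Nat.cast_zero]
    · rw [hcoeff1, ← h1, Nat.cast_one]
  have hu : modXPow 2 (dissect 0 (J 1)) = modXPow 2 1 :=
    hpart 0 (by simp) (by rw [if_neg (by decide), coeff_one, if_neg one_ne_zero])
  have hv : modXPow 2 (dissect 1 (J 1)) = modXPow 2 (-X) :=
    hpart 1 (by rw [if_neg (by decide), map_neg, coeff_zero_X, neg_zero]) (by simp)
  have hy : modXPow 2 (dissect 5 (J 1)) = modXPow 2 0 := hpart 5 (by decide) (by decide)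
  have hw : modXPow 2 (dissect 2 (J 1)) = modXPow 2 0 := hpart 2 (by decide) (by decide)
  rw [kleinDissect, map_kleinForm, hu, hv, hy, hw, ← map_kleinForm, kleinForm]
  exact congrArg _ (by ring)

theorem kleinDissect_J_one : kleinDissect (J 1) = X * J 7 ^ 4 := by
  obtain h | h := sq_eq_sq_iff_eq_or_eq_neg.1 kleinDissect_J_one_sq
  · exact h
  · have hcoeff := modXPow_eq_iff.1 modXPow_two_kleinDissect_J_one 1 one_lt_two
    rw [h, map_neg, coeff_one_X, show (1 : ℕ) = 0 + 1 from rfl, coeff_succ_X_mul,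
      coeff_zero_eq_constantCoeff_apply, map_pow, constantCoeff_J (by norm_num)] at hcoeff
    norm_num at hcoeff

end KleinDissect

lemma expand7_eq_expand (f : PowerSeries ℤ) : expand7 f = PowerSeries.expand 7 (by norm_num) f := by
  ext n
  rw [expand7, PowerSeries.coeff_mk, PowerSeries.coeff_expand]

/-- with `t = q·J_7^4/J_1^4`, one has
`t(q)^7 = ∑_{l=0}^{6} a_l(t(q^7))·t(q)^l` as formal power series. -/
theorem stmt4 (t : PowerSeries ℤ)
    (ht : t * (J 1) ^ 4 = PowerSeries.X * (J 7) ^ 4) :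
    t ^ 7 = ∑ l ∈ Finset.range 7, aPoly l (expand7 t) * t ^ l := by
  have hexpand : expand7 t * J 7 ^ 4 = PowerSeries.X ^ 7 * J 49 ^ 4 := by
    have h := congrArg expand7 ht
    simp only [expand7_eq_expand] at h ⊢
    rwa [map_mul, map_mul, map_pow, map_pow, PowerSeries.expand_X, expand_J one_ne_zero,
      expand_J (by norm_num)] at h
  have ht0 : t ≠ 0 := by
    rintro rfl
    rw [zero_mul] at ht
    exact mul_ne_zero PowerSeries.X_ne_zero (pow_ne_zero 4 (J_ne_zero (by norm_num))) ht.symm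
  refine modular_equation_of_eval_septic (e := J 1) (w := dissect (2 : ZMod 7) (J 1))
    (J_ne_zero one_ne_zero) ht0 ?_ ?_
  · rw [ht, ← kleinDissect_J_one]
    exact hasSepticDissection_J_one.eval_septic_eq_zero
  · rw [ht, dissect_two_J_one]
    linear_combination -PowerSeries.X * hexpand
end
end
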